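/- Let ℓ : π → ∧²H be a half-intersection cocycle for φ, and let ⟨·,·⟩ be an alternating bilinear form on H with associated contraction action of ∧²H on H. Let a, b ∈ π satisfy ⟨φ(a),φ(b)⟩ = 0. Then for all c, d ∈ π: ℓ(c a c⁻¹)(φ(b)) + ℓ(d b d⁻¹)(φ(a)) = ℓ(a)(φ(b)) + ℓ(b)(φ(a)) + ⟨φ(b),φ(c)⟩·φ(a) + ⟨φ(a),φ(d)⟩·φ(b). -/

import Mathlib

open scoped TensorProduct

/-- The wedge `x ∧ y` as an element of the exterior square `⋀[ℚ]^2 H`. -/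
noncomputable def wedge {H : Type*} [AddCommGroup H] [Module ℚ H] (x y : H) : ⋀[ℚ]^2 H :=
  ⟨ExteriorAlgebra.ι ℚ x * ExteriorAlgebra.ι ℚ y, by
    rw [ExteriorAlgebra.exteriorPower, pow_two]
    exact Submodule.mul_mem_mul (LinearMap.mem_range_self _ x) (LinearMap.mem_range_self _ y)⟩

/-- `ℓ : π → ⋀²H` is a half-intersection cocycle for `φ` if `ℓ(1) = 0` and
`ℓ(gh) = ℓ(g) + ℓ(h) + (1/2)·φ(g)∧φ(h)`. -/
def IsHalfCocycle {π H : Type*} [Group π] [AddCommGroup H] [Module ℚ H]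
    (φ : π → H) (ℓ : π → ⋀[ℚ]^2 H) : Prop :=
  ℓ 1 = 0 ∧ ∀ g h : π, ℓ (g * h) = ℓ g + ℓ h + (1/2 : ℚ) • wedge (φ g) (φ h)

/-!
Since `φ(g⁻¹) = -φ(g)` and `x ∧ x = 0`, the cocycle is odd under inversion. Expanding
`ℓ(c a c⁻¹)`, the terms `ℓ(c)` and `ℓ(c⁻¹)` therefore cancel, and the two half-wedges
`φ(c) ∧ φ(a) / 2` and `(φ(c) + φ(a)) ∧ (-φ(c)) / 2` add up to `φ(c) ∧ φ(a)`. So conjugation by `c`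
changes `ℓ(a)` by exactly `φ(c) ∧ φ(a)`, whose contraction with `φ(b)` is
`⟨φ(b), φ(c)⟩ φ(a) - ⟨φ(b), φ(a)⟩ φ(c)`.
-/

section Wedge

variable {H : Type*} [AddCommGroup H] [Module ℚ H] (x y z : H)

theorem wedge_self : wedge x x = 0 :=
  Subtype.ext (ExteriorAlgebra.ι_sq_zero x)

theorem wedge_add_left : wedge (x + y) z = wedge x z + wedge y z :=
  Subtype.ext (by simp [wedge, add_mul])

theorem wedge_neg_right : wedge x (-y) = -wedge x y :=
  Subtype.ext (by simp [wedge])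

theorem neg_wedge : -wedge x y = wedge y x :=
  neg_eq_of_add_eq_zero_right (Subtype.ext (ExteriorAlgebra.ι_add_mul_swap x y))

end Wedge

theorem map_inv_eq_neg_of_map_mul_eq_add {G A : Type*} [Group G] [AddGroup A] {φ : G → A}
    (hφ : ∀ g h : G, φ (g * h) = φ g + φ h) (g : G) : φ g⁻¹ = -φ g :=
  map_inv (MonoidHom.mk' (G := Multiplicative A) φ hφ) g

namespace IsHalfCocycle

variable {π H : Type*} [Group π] [AddCommGroup H] [Module ℚ H] {φ : π → H} {ℓ : π → ⋀[ℚ]^2 H}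

theorem map_inv (hℓ : IsHalfCocycle φ ℓ) (hφ : ∀ g h : π, φ (g * h) = φ g + φ h) (g : π) :
    ℓ g⁻¹ = -ℓ g := by
  have wedge_inv : wedge (φ g) (φ g⁻¹) = 0 := by
    rw [map_inv_eq_neg_of_map_mul_eq_add hφ, wedge_neg_right, wedge_self, neg_zero]
  refine (neg_eq_of_add_eq_zero_right ?_).symm
  calc ℓ g + ℓ g⁻¹ = ℓ (g * g⁻¹) := by rw [hℓ.2, wedge_inv, smul_zero, add_zero]
    _ = 0 := by rw [mul_inv_cancel, hℓ.1]

theorem map_conj (hℓ : IsHalfCocycle φ ℓ) (hφ : ∀ g h : π, φ (g * h) = φ g + φ h) (c a : π) :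
    ℓ (c * a * c⁻¹) = ℓ a + wedge (φ c) (φ a) := by
  have wedge_conj : wedge (φ (c * a)) (φ c⁻¹) = wedge (φ c) (φ a) := by
    rw [hφ, map_inv_eq_neg_of_map_mul_eq_add hφ, wedge_neg_right, wedge_add_left, wedge_self,
      zero_add, neg_wedge]
  rw [hℓ.2, hℓ.2, hℓ.map_inv hφ, wedge_conj]
  module

end IsHalfCocycle

theorem ell_conjugates_pairing_general {π H : Type*} [Group π] [AddCommGroup H] [Module ℚ H]
    {φ : π → H} (hφ : ∀ g h : π, φ (g * h) = φ g + φ h)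
    {ℓ : π → ⋀[ℚ]^2 H} (hℓ : IsHalfCocycle φ ℓ)
    {ω : H →ₗ[ℚ] H →ₗ[ℚ] ℚ} {act : ⋀[ℚ]^2 H →ₗ[ℚ] H →ₗ[ℚ] H}
    (hact : ∀ X Y Z : H, act (wedge X Y) Z = ω Z X • Y - ω Z Y • X) (a b c d : π) :
    act (ℓ (c * a * c⁻¹)) (φ b) + act (ℓ (d * b * d⁻¹)) (φ a)
      = act (ℓ a) (φ b) + act (ℓ b) (φ a)
        + (ω (φ b) (φ c) • φ a - ω (φ b) (φ a) • φ c)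
        + (ω (φ a) (φ d) • φ b - ω (φ a) (φ b) • φ d) := by
  simp only [hℓ.map_conj hφ, map_add, LinearMap.add_apply, hact]
  abel

theorem ell_conjugates_pairing {π H : Type*} [Group π] [AddCommGroup H] [Module ℚ H]
    (φ : π → H) (hφ : ∀ g h : π, φ (g * h) = φ g + φ h)
    (ℓ : π → ⋀[ℚ]^2 H) (hℓ : IsHalfCocycle φ ℓ)
    (ω : H →ₗ[ℚ] H →ₗ[ℚ] ℚ) (halt : ∀ v : H, ω v v = 0)
    (act : ⋀[ℚ]^2 H →ₗ[ℚ] H →ₗ[ℚ] H)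
    (hact : ∀ X Y Z : H, act (wedge X Y) Z = ω Z X • Y - ω Z Y • X)
    (a b : π) (hab : ω (φ a) (φ b) = 0) :
    ∀ c d : π,
      act (ℓ (c * a * c⁻¹)) (φ b) + act (ℓ (d * b * d⁻¹)) (φ a)
        = act (ℓ a) (φ b) + act (ℓ b) (φ a)
          + ω (φ b) (φ c) • φ a + ω (φ a) (φ d) • φ b := by
  intro c d
  have hba : ω (φ b) (φ a) = 0 := (LinearMap.IsAlt.eq_iff halt).mp hab
  simpa only [hab, hba, zero_smul, sub_zero] using
    ell_conjugates_pairing_general hφ hℓ hact a b c d
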